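/- P-type setup: let κ₁ < κ₂ < κ₃ < κ₄ with κ₂+κ₃ ≠ κ₁+κ₄, a₂₃ = (κ₂+κ₃)/2, a₁₄ = (κ₁+κ₄)/2, c₂₃ = (κ₃−κ₂)²/4, and let (b₁,b₂) solve b₁ + 2a₂₃b₂ = ω₂₃, b₁ + 2a₁₄b₂ = ω₁₄ with ω_{ij} = κᵢ²+κᵢκⱼ+κⱼ². Assume 0 < α < min{√c₂₃, ((b₂−3a₂₃)² − c₂₃)/(4|a₁₄−a₂₃|), c₂₃/(3|a₁₄−a₂₃|)} and set η_I := 2α(a₁₄ − a₂₃). Define λ_{1,±}(η) := iη(b₂ − 3a₂₃ ± γ_{c₂₃}(±η)) for η = η_R + iη_I, η_R ∈ ℝ, where γ_{c₂₃} is the principal square root of c₂₃ + i(·). Then: (i) for every η_R ≠ 0, the function η_R ↦ Re λ_{1,±}(η_R + iη_I) is differentiable and η_R·(d/dη_R)Re λ_{1,±}(η_R + iη_I) < 0; (ii) Re λ_{1,±}(η_R + iη_I) ≤ Re λ_{1,±}(iη_I) for all η_R ∈ ℝ; and (iii) there is a constant C > 0 depending only on κ₁, κ₂, κ₃, κ₄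 such that Re λ_{1,±}(iη_I) ≤ −Cα for every α in the stated range. -/

import Mathlib

/-- principal square root of c + iμ, μ complex -/
noncomputable def gamC (c : ℝ) (μ : ℂ) : ℂ := ((c : ℂ) + Complex.I * μ) ^ ((1 : ℂ)/2)

/-- λ₊(η) = iη(b + γ_c(η)) for complex η -/
noncomputable def lamCP (c b : ℝ) (η : ℂ) : ℂ := Complex.I * η * ((b : ℂ) + gamC c η)

/-- λ₋(η) = iη(b − γ_c(−η)) for complex η -/
noncomputable def lamCM (c b : ℝ) (η : ℂ) : ℂ := Complex.I * η * ((b : ℂ) - gamC c (-η))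

/-- η_R ↦ Re λ₊(η_R + iη_I) -/
noncomputable def reP (c b ηI : ℝ) (s : ℝ) : ℝ :=
  (lamCP c b ((s : ℂ) + (ηI : ℂ) * Complex.I)).re

/-- η_R ↦ Re λ₋(η_R + iη_I) -/
noncomputable def reM (c b ηI : ℝ) (s : ℝ) : ℝ :=
  (lamCM c b ((s : ℂ) + (ηI : ℂ) * Complex.I)).re

/-- The principal square root squares to its radicand. -/
lemma gamC_sq (c : ℝ) (μ : ℂ) : gamC c μ ^ 2 = (c : ℂ) + Complex.I * μ := by
  simp [gamC, one_div]

/-- The principal square root lies in the open right half plane off the cut. -/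
lemma gamC_re_pos {c : ℝ} {μ : ℂ} (h : 0 < ((c : ℂ) + Complex.I * μ).re) :
    0 < (gamC c μ).re := by
  set w := (c : ℂ) + Complex.I * μ with hw
  have hw0 : w ≠ 0 := by
    intro h0
    simp [h0] at h
  have hre : (Complex.log w * (1 / 2 : ℂ)).im = w.arg / 2 := by
    rw [show (1 / 2 : ℂ) = ((1 / 2 : ℝ) : ℂ) by push_cast; rfl, Complex.im_mul_ofReal,
      Complex.log_im]
    ring
  rw [gamC, ← hw, Complex.cpow_def_of_ne_zero hw0, Complex.exp_re, hre]
  refine mul_pos (Real.exp_pos _) (Real.cos_pos_of_mem_Ioo ⟨?_, ?_⟩)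
  · linarith [Complex.neg_pi_lt_arg w, Real.pi_pos]
  · have := (abs_lt.mp (Complex.abs_arg_lt_pi_div_two_iff.mpr (Or.inl h))).2
    linarith [Real.pi_pos]

/-- Along the line `Im η = ηI`, the principal square root `p + iq` satisfies
`p > 0`, `p² - q² = c - ηI` and `2pq = s`. -/
lemma gamC_line_re_im {c ηI : ℝ} (h : ηI < c) (s : ℝ) :
    0 < (gamC c ((s : ℂ) + (ηI : ℂ) * Complex.I)).re ∧
    (gamC c ((s : ℂ) + (ηI : ℂ) * Complex.I)).re ^ 2
      - (gamC c ((s : ℂ) + (ηI : ℂ) * Complex.I)).im ^ 2 = c - ηI ∧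
    2 * (gamC c ((s : ℂ) + (ηI : ℂ) * Complex.I)).re
      * (gamC c ((s : ℂ) + (ηI : ℂ) * Complex.I)).im = s := by
  have hsq := gamC_sq c ((s : ℂ) + (ηI : ℂ) * Complex.I)
  refine ⟨gamC_re_pos (by simp; linarith), ?_, ?_⟩
  · have := congrArg Complex.re hsq
    simp [pow_two] at this
    linarith
  · have := congrArg Complex.im hsq
    simp [pow_two] at this
    linarith

/-- `Re λ₊` in terms of the principal square root `γ`. -/
lemma reP_eq (c b ηI s : ℝ) :
    reP c b ηI s = -b * ηI + (gamC c ((s : ℂ) + (ηI : ℂ) * Complex.I) ^ 3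
      - c * gamC c ((s : ℂ) + (ηI : ℂ) * Complex.I)).re := by
  have hsq := gamC_sq c ((s : ℂ) + (ηI : ℂ) * Complex.I)
  have h3 : gamC c ((s : ℂ) + (ηI : ℂ) * Complex.I) ^ 3
      - c * gamC c ((s : ℂ) + (ηI : ℂ) * Complex.I)
      = Complex.I * ((s : ℂ) + (ηI : ℂ) * Complex.I)
        * gamC c ((s : ℂ) + (ηI : ℂ) * Complex.I) := by
    linear_combination gamC c ((s : ℂ) + (ηI : ℂ) * Complex.I) * hsq
  rw [h3, reP, lamCP, mul_add, Complex.add_re]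
  simp
  ring

/-- `Re λ₊` as a cubic polynomial in `Re γ`. -/
lemma reP_eq_cubic {c ηI : ℝ} (b : ℝ) (h : ηI < c) (s : ℝ) :
    reP c b ηI s = -b * ηI
      - 2 * (gamC c ((s : ℂ) + (ηI : ℂ) * Complex.I)).re ^ 3
      + (3 * (c - ηI) - c) * (gamC c ((s : ℂ) + (ηI : ℂ) * Complex.I)).re := by
  obtain ⟨-, hq, -⟩ := gamC_line_re_im h s
  rw [reP_eq]
  simp [pow_succ]
  linear_combination 3 * (gamC c ((s : ℂ) + (ηI : ℂ) * Complex.I)).re * hq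

/-- At `η_R = 0` the principal square root is `√(c - ηI)`. -/
lemma gamC_line_zero_re {c ηI : ℝ} (h : ηI < c) :
    (gamC c (((0 : ℝ) : ℂ) + (ηI : ℂ) * Complex.I)).re = √(c - ηI) := by
  obtain ⟨hp, hq, hs⟩ := gamC_line_re_im h 0
  have hq0 : (gamC c (((0 : ℝ) : ℂ) + (ηI : ℂ) * Complex.I)).im = 0 := by
    rcases mul_eq_zero.mp hs with h0 | h0
    · linarith
    · exact h0
  rw [← hq, hq0]
  rw [zero_pow two_ne_zero, sub_zero, Real.sqrt_sq hp.le]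

lemma reP_zero {c ηI : ℝ} (b : ℝ) (h : ηI < c) :
    reP c b ηI 0 = -ηI * (b + √(c - ηI)) := by
  rw [reP_eq_cubic b h, gamC_line_zero_re h]
  have := Real.sq_sqrt (sub_nonneg.mpr h.le)
  linear_combination (-2) * √(c - ηI) * this

/-- `Re λ₊` attains its maximum along the line `Im η = ηI` at `η_R = 0`. -/
lemma reP_le_reP_zero {c ηI : ℝ} (b : ℝ) (hc : 0 < c) (h : ηI < c) (s : ℝ) :
    reP c b ηI s ≤ reP c b ηI 0 := by
  obtain ⟨hp, hq, -⟩ := gamC_line_re_im h s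
  have hle : √(c - ηI) ≤ (gamC c ((s : ℂ) + (ηI : ℂ) * Complex.I)).re :=
    Real.sqrt_le_iff.mpr ⟨hp.le, by
      nlinarith [sq_nonneg (gamC c ((s : ℂ) + (ηI : ℂ) * Complex.I)).im]⟩
  rw [reP_eq_cubic b h, reP_eq_cubic b h, gamC_line_zero_re h]
  have hr := Real.sq_sqrt (sub_nonneg.mpr h.le)
  have hr0 := Real.sqrt_nonneg (c - ηI)
  generalize (gamC c ((s : ℂ) + (ηI : ℂ) * Complex.I)).re = p at *
  generalize √(c - ηI) = r at *
  rw [← hr]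
  have hfac : 0 ≤ (p - r) * (2 * p ^ 2 + 2 * p * r - r ^ 2 + c) :=
    mul_nonneg (sub_nonneg.mpr hle) (by nlinarith)
  linarith [show (p - r) * (2 * p ^ 2 + 2 * p * r - r ^ 2 + c)
    = 2 * p ^ 3 - (3 * r ^ 2 - c) * p - (2 * r ^ 3 - (3 * r ^ 2 - c) * r) by ring]

/-- The principal square root is differentiable along the line `Im η = ηI`. -/
lemma hasDerivAt_gamC_line {c ηI : ℝ} (h : ηI < c) (s : ℝ) :
    HasDerivAt (fun t : ℝ => gamC c ((t : ℂ) + (ηI : ℂ) * Complex.I))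
      (Complex.I / (2 * gamC c ((s : ℂ) + (ηI : ℂ) * Complex.I))) s := by
  have hre : 0 < ((c : ℂ) + Complex.I * ((s : ℂ) + (ηI : ℂ) * Complex.I)).re := by
    simp
    linarith
  have hlin : HasDerivAt
      (fun t : ℝ => (c : ℂ) + Complex.I * ((t : ℂ) + (ηI : ℂ) * Complex.I)) Complex.I s := by
    simpa using ((Complex.ofRealCLM.hasDerivAt (x := s)).add_const
      ((ηI : ℂ) * Complex.I)).const_mul Complex.I |>.const_add (c : ℂ)
  have hpow := (hasDerivAt_id ((c : ℂ) + Complex.I * ((s : ℂ) + (ηI : ℂ) * Complex.I))).cpow_const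
    (c := (1 : ℂ) / 2) (Or.inl hre)
  have hcomp := hpow.comp_of_eq s hlin rfl
  refine hcomp.congr_deriv ?_
  have hw0 : (c : ℂ) + Complex.I * ((s : ℂ) + (ηI : ℂ) * Complex.I) ≠ 0 := by
    intro h0
    simp [h0] at hre
  have hg0 : gamC c ((s : ℂ) + (ηI : ℂ) * Complex.I) ≠ 0 := by
    intro h0
    have := gamC_re_pos hre
    simp [h0] at this
  have hsq := gamC_sq c ((s : ℂ) + (ηI : ℂ) * Complex.I)
  simp only [id]
  rw [Complex.cpow_sub _ _ hw0, Complex.cpow_one, ← gamC, ← hsq]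
  field_simp

/-- The derivative of `Re λ₊` along the line `Im η = ηI` has the sign opposite to `η_R`. -/
lemma reP_deriv_neg {c ηI : ℝ} (b : ℝ) (hc : 0 < c) (h : ηI < c) {s : ℝ} (hs : s ≠ 0) :
    DifferentiableAt ℝ (reP c b ηI) s ∧ s * deriv (reP c b ηI) s < 0 := by
  obtain ⟨hp, -, hpq⟩ := gamC_line_re_im h s
  have hg := hasDerivAt_gamC_line h s
  have hd := (Complex.reCLM.hasFDerivAt.comp_hasDerivAt s
    ((hg.pow 3).sub (hg.const_mul (c : ℂ)))).const_add (-b * ηI)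
  have hd' := hd.congr_of_eventuallyEq (f₁ := reP c b ηI) (.of_forall (reP_eq c b ηI))
  refine ⟨hd'.differentiableAt, ?_⟩
  rw [hd'.deriv]
  generalize gamC c ((s : ℂ) + (ηI : ℂ) * Complex.I) = g at *
  have hg0 : g ≠ 0 := by
    rintro rfl
    simp at hp
  have hn : 0 < Complex.normSq g := Complex.normSq_pos.mpr hg0
  have hval : (3 : ℂ) * g ^ 2 * (Complex.I / (2 * g)) - c * (Complex.I / (2 * g))
      = Complex.I * (((3 / 2 : ℝ) : ℂ) * g - ((c / 2 : ℝ) : ℂ) * g⁻¹) := by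
    push_cast
    field_simp
  have hder : ((3 : ℂ) * g ^ 2 * (Complex.I / (2 * g)) - c * (Complex.I / (2 * g))).re
      = -(g.im * (3 / 2 + c / 2 / Complex.normSq g)) := by
    rw [hval, Complex.I_mul_re, Complex.sub_im, Complex.im_ofReal_mul, Complex.im_ofReal_mul,
      Complex.inv_im]
    ring
  have hq0 : g.im ≠ 0 := by
    intro h0
    rw [h0, mul_zero] at hpq
    exact hs hpq.symm
  have hpos : 0 < 2 * g.re * g.im ^ 2 * (3 / 2 + c / 2 / Complex.normSq g) := by positivity
  have hgoal : s * ((3 : ℂ) * g ^ 2 * (Complex.I / (2 * g)) - c * (Complex.I / (2 * g))).re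
      < 0 := by
    rw [hder, ← hpq]
    linarith
  simpa using hgoal

/-- `Re λ₋` is obtained from `Re λ₊` by reflection. -/
lemma reM_eq_reP_neg (c b ηI s : ℝ) : reM c b ηI s = reP c (-b) (-ηI) (-s) := by
  have harg : ((-s : ℝ) : ℂ) + ((-ηI : ℝ) : ℂ) * Complex.I
      = -((s : ℂ) + (ηI : ℂ) * Complex.I) := by
    push_cast
    ring
  rw [reM, reP, lamCM, lamCP, harg]
  congr 1
  push_cast
  ring

lemma reM_deriv_neg {c ηI : ℝ} (b : ℝ) (hc : 0 < c) (h : -ηI < c) {s : ℝ} (hs : s ≠ 0) :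
    DifferentiableAt ℝ (reM c b ηI) s ∧ s * deriv (reM c b ηI) s < 0 := by
  obtain ⟨hd, hneg⟩ := reP_deriv_neg (-b) hc h (neg_ne_zero.mpr hs)
  have hM : HasDerivAt (reM c b ηI) (-deriv (reP c (-b) (-ηI)) (-s)) s := by
    rw [show reM c b ηI = fun t => reP c (-b) (-ηI) (-t) from funext (reM_eq_reP_neg c b ηI)]
    exact (hd.hasDerivAt.comp s (hasDerivAt_neg s)).congr_deriv (mul_neg_one _)
  refine ⟨hM.differentiableAt, ?_⟩
  rw [hM.deriv]
  linarith

lemma reM_le_reM_zero {c ηI : ℝ} (b : ℝ) (hc : 0 < c) (h : -ηI < c) (s : ℝ) :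
    reM c b ηI s ≤ reM c b ηI 0 := by
  rw [reM_eq_reP_neg, reM_eq_reP_neg, neg_zero]
  exact reP_le_reP_zero (-b) hc h (-s)

lemma reM_zero {c ηI : ℝ} (b : ℝ) (h : -ηI < c) :
    reM c b ηI 0 = -ηI * (b - √(c + ηI)) := by
  rw [reM_eq_reP_neg, neg_zero, reP_zero (-b) h, sub_neg_eq_add]
  ring

/-- If `d` and `b` have the same sign, then `d * (b + x)` is bounded below whenever `|x| ≤ r`. -/
lemma abs_mul_abs_sub_le_mul_add {d b r x : ℝ} (hdb : 0 ≤ d * b) (hx : |x| ≤ r) :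
    |d| * (|b| - r) ≤ d * (b + x) := by
  have h1 : |d| * |b| = d * b := by rw [← abs_mul, abs_of_nonneg hdb]
  have h2 : -(|d| * |x|) ≤ d * x := by
    rw [← abs_mul]
    exact neg_abs_le _
  nlinarith [mul_le_mul_of_nonneg_left hx (abs_nonneg d)]

/-- the resonant continuous eigenvalues λ_{1,±}(η_R + iη_I)
associated with the [2,3]-soliton of a P-type 2-line soliton lie in the
stable half plane, uniformly in the admissible weights α. -/
theorem resonant_eigenvalues_23_soliton_P
    (κ₁ κ₂ κ₃ κ₄ a₂₃ a₁₄ c₂₃ ω₂₃ ω₁₄ b₁ b₂ : ℝ)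
    (h12 : κ₁ < κ₂) (h23 : κ₂ < κ₃) (h34 : κ₃ < κ₄)
    (hne : κ₂ + κ₃ ≠ κ₁ + κ₄)
    (ha23 : a₂₃ = (κ₂ + κ₃)/2) (ha14 : a₁₄ = (κ₁ + κ₄)/2)
    (hc23 : c₂₃ = (κ₃ - κ₂)^2/4)
    (hω23 : ω₂₃ = κ₂^2 + κ₂*κ₃ + κ₃^2) (hω14 : ω₁₄ = κ₁^2 + κ₁*κ₄ + κ₄^2)
    (hb1 : b₁ + 2*a₂₃*b₂ = ω₂₃) (hb2 : b₁ + 2*a₁₄*b₂ = ω₁₄) :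
    (∀ α : ℝ, 0 < α → α < Real.sqrt c₂₃ →
      α < ((b₂ - 3*a₂₃)^2 - c₂₃)/(4*|a₁₄ - a₂₃|) →
      α < c₂₃/(3*|a₁₄ - a₂₃|) →
      ((∀ ηR : ℝ, ηR ≠ 0 →
          (DifferentiableAt ℝ (reP c₂₃ (b₂ - 3*a₂₃) (2*α*(a₁₄ - a₂₃))) ηR
            ∧ ηR * deriv (reP c₂₃ (b₂ - 3*a₂₃) (2*α*(a₁₄ - a₂₃))) ηR < 0)
          ∧ (DifferentiableAt ℝ (reM c₂₃ (b₂ - 3*a₂₃) (2*α*(a₁₄ - a₂₃))) ηR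
            ∧ ηR * deriv (reM c₂₃ (b₂ - 3*a₂₃) (2*α*(a₁₄ - a₂₃))) ηR < 0))
        ∧ (∀ ηR : ℝ,
            reP c₂₃ (b₂ - 3*a₂₃) (2*α*(a₁₄ - a₂₃)) ηR
              ≤ reP c₂₃ (b₂ - 3*a₂₃) (2*α*(a₁₄ - a₂₃)) 0
            ∧ reM c₂₃ (b₂ - 3*a₂₃) (2*α*(a₁₄ - a₂₃)) ηR
              ≤ reM c₂₃ (b₂ - 3*a₂₃) (2*α*(a₁₄ - a₂₃)) 0)))
    ∧ (∃ C : ℝ, 0 < C ∧ ∀ α : ℝ, 0 < α → α < Real.sqrt c₂₃ →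
        α < ((b₂ - 3*a₂₃)^2 - c₂₃)/(4*|a₁₄ - a₂₃|) →
        α < c₂₃/(3*|a₁₄ - a₂₃|) →
        reP c₂₃ (b₂ - 3*a₂₃) (2*α*(a₁₄ - a₂₃)) 0 ≤ -C*α
        ∧ reM c₂₃ (b₂ - 3*a₂₃) (2*α*(a₁₄ - a₂₃)) 0 ≤ -C*α) := by
  have hc : 0 < c₂₃ := by
    rw [hc23]
    have : 0 < κ₃ - κ₂ := sub_pos.mpr h23
    positivity
  have hd : a₁₄ - a₂₃ ≠ 0 := by
    rw [ha23, ha14]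
    intro h
    exact hne (by linarith)
  have hdb : 0 < (a₁₄ - a₂₃) * (b₂ - 3 * a₂₃) := by
    have key : (a₁₄ - a₂₃) * (b₂ - 3 * a₂₃)
        = 3 / 2 * (a₁₄ - a₂₃) ^ 2 + ((κ₄ - κ₁) ^ 2 - (κ₃ - κ₂) ^ 2) / 8 := by
      subst ha23 ha14 hω23 hω14
      linear_combination (hb2 - hb1) / 2
    rw [key]
    have h1 : 0 < (κ₄ - κ₁) ^ 2 - (κ₃ - κ₂) ^ 2 := by nlinarith
    positivity
  generalize b₂ - 3 * a₂₃ = b at *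
  generalize a₁₄ - a₂₃ = d at *
  have hd0 : 0 < |d| := abs_pos.mpr hd
  have habs : ∀ α : ℝ, 0 < α → |2 * α * d| = 2 * α * |d| := fun α hα => by
    rw [abs_mul, abs_of_pos (by positivity)]
  have hbound : ∀ α : ℝ, 0 < α → α < c₂₃ / (3 * |d|) → |2 * α * d| < c₂₃ := by
    intro α hα h
    rw [lt_div_iff₀ (by positivity)] at h
    rw [habs α hα]
    nlinarith [mul_pos hα hd0]
  refine ⟨fun α hα _ _ h3 => ?_, ?_⟩
  · obtain ⟨hl, hr⟩ := abs_lt.mp (hbound α hα h3)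
    have hl' : -(2 * α * d) < c₂₃ := by linarith
    exact ⟨fun s hs => ⟨reP_deriv_neg b hc hr hs, reM_deriv_neg b hc hl' hs⟩,
      fun s => ⟨reP_le_reP_zero b hc hr s, reM_le_reM_zero b hc hl' s⟩⟩
  · by_cases hbc : c₂₃ < b ^ 2
    · have hgap : 0 < |b| - √((b ^ 2 + c₂₃) / 2) := by
        rw [sub_pos, Real.sqrt_lt' (abs_pos.mpr (right_ne_zero_of_mul hdb.ne')), sq_abs]
        linarith
      refine ⟨2 * (|d| * (|b| - √((b ^ 2 + c₂₃) / 2))), by positivity, ?_⟩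
      intro α hα _ h2 h3
      obtain ⟨hl, hr⟩ := abs_lt.mp (hbound α hα h3)
      have hη : |2 * α * d| < (b ^ 2 - c₂₃) / 2 := by
        rw [lt_div_iff₀ (by positivity)] at h2
        rw [habs α hα]
        linarith
      obtain ⟨hl2, hr2⟩ := abs_lt.mp hη
      rw [reP_zero b hr, reM_zero b (by linarith)]
      constructor
      · have := abs_mul_abs_sub_le_mul_add (r := √((b ^ 2 + c₂₃) / 2))
          (x := √(c₂₃ - 2 * α * d)) hdb.le
          (by rw [abs_of_nonneg (Real.sqrt_nonneg _)]; exact Real.sqrt_le_sqrt (by linarith))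
        nlinarith
      · have := abs_mul_abs_sub_le_mul_add (r := √((b ^ 2 + c₂₃) / 2))
          (x := -√(c₂₃ + 2 * α * d)) hdb.le
          (by rw [abs_neg, abs_of_nonneg (Real.sqrt_nonneg _)]
              exact Real.sqrt_le_sqrt (by linarith))
        nlinarith
    · refine ⟨1, one_pos, fun α hα _ h2 _ => absurd (hα.trans h2) (not_lt.mpr ?_)⟩
      exact div_nonpos_of_nonpos_of_nonneg (by linarith) (by positivity)
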